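/- Let V be an n-dimensional vector space over a field F of characteristic 0, let 0 ≠ vol ∈ Λⁿ V*, let k ∈ {1,…,n−1}, and let δ : Λ^k V → Λ^{n−k} V* be the dual isomorphism δ(X) := X ⌟ vol. Then: (i) if X ∈ Λ^k V satisfies r(X) = 0, then ρ(δ(X)) < n; (ii) if X ∈ Λ^k V satisfies ρ(X) = n and r(X) > 0, then ρ(δ(X)) = n, m(δ(X)) = r(X), and r(δ(X)) = m(X). -/

import Mathlib

open Module

section Machinery

variable {F : Type*} [Field F] {M : Type*} [AddCommGroup M] [Module F M]

/-- `X` is a decomposable `k`-vector, with factors taken from the ambient subspace `A`. -/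
def Dec (A : Submodule F M) (k : ℕ) (X : ExteriorAlgebra F M) : Prop :=
  ∃ v : Fin k → M, (∀ i, v i ∈ A) ∧ X = (List.ofFn fun i => ExteriorAlgebra.ι F (v i)).prod

/-- `X` is a sum of `l` decomposable `k`-vectors with factors from `A`. -/
def LenLE (A : Submodule F M) (k l : ℕ) (X : ExteriorAlgebra F M) : Prop :=
  ∃ Y : Fin l → ExteriorAlgebra F M, (∀ i, Dec A k (Y i)) ∧ X = ∑ i, Y i

/-- `X` has (irreducible) length `l` as a `k`-vector: it is a sum of `l` decomposable
`k`-vectors, and of no smaller number of them. -/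
def HasLen (A : Submodule F M) (k l : ℕ) (X : ExteriorAlgebra F M) : Prop :=
  LenLE A k l X ∧ ∀ j < l, ¬ LenLE A k j X

/-- The (irreducible) length of the `k`-vector `X`. -/
noncomputable def len (A : Submodule F M) (k : ℕ) (X : ExteriorAlgebra F M) : ℕ :=
  sInf {l | LenLE A k l X}

/-- `X` belongs to `Λ^k W`, regarded as a subspace of the exterior algebra. -/
def memPow (W : Submodule F M) (k : ℕ) (X : ExteriorAlgebra F M) : Prop :=
  X ∈ (W.map (ExteriorAlgebra.ι F)) ^ k

/-- The support `[X]` of the `k`-vector `X`: the intersection of all subspaces `W`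
with `X ∈ Λ^k W`. -/
noncomputable def supp (k : ℕ) (X : ExteriorAlgebra F M) : Submodule F M :=
  sInf {W | memPow W k X}

/-- The rank `ρ(X) = dim [X]` of the `k`-vector `X`. -/
noncomputable def rkInv (k : ℕ) (X : ExteriorAlgebra F M) : ℕ :=
  Module.finrank F (supp k X)

/-- `(v, W, X₁, X₂)` is an admissible splitting `X = X₁ ∧ v + X₂` of the `k`-vector `X`:
`v ∈ [X] ∖ {0}`, `W` is a complement of `span v` in `[X]`, `X₁ ∈ Λ^(k-1) W` and
`X₂ ∈ Λ^k W`. -/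
def Split (k : ℕ) (X : ExteriorAlgebra F M) (v : M) (W : Submodule F M)
    (X₁ X₂ : ExteriorAlgebra F M) : Prop :=
  v ∈ supp k X ∧ v ≠ 0 ∧
    W ⊔ Submodule.span F {v} = supp k X ∧ W ⊓ Submodule.span F {v} = ⊥ ∧
    memPow W (k - 1) X₁ ∧ memPow W k X₂ ∧
    X = X₁ * ExteriorAlgebra.ι F v + X₂

/-- The invariant `m(X) = min { l(X₁) }` over all admissible splittings of `X`. -/
noncomputable def mInv (A : Submodule F M) (k : ℕ) (X : ExteriorAlgebra F M) : ℕ :=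
  sInf {l | ∃ v W X₁ X₂, Split k X v W X₁ X₂ ∧ HasLen A (k - 1) l X₁}

/-- The invariant `r(X) = min { l(X₂) }` over all admissible splittings of `X`. -/
noncomputable def rInv (A : Submodule F M) (k : ℕ) (X : ExteriorAlgebra F M) : ℕ :=
  sInf {l | ∃ v W X₁ X₂, Split k X v W X₁ X₂ ∧ HasLen A k l X₂}

end Machinery

section Eval

variable {F : Type*} [Field F] {V : Type*} [AddCommGroup V] [Module F V]

/-- Evaluation of an element of the exterior algebra of the dual space (in degree `m`)
on an `m`-tuple of vectors, via the determinant pairing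
`(φ₁ ∧ … ∧ φ_m)(v₁,…,v_m) = det (φ_i (v_j))`. -/
noncomputable def evalForm (m : ℕ) (Ψ : ExteriorAlgebra F (Module.Dual F V))
    (v : Fin m → V) : F :=
  ExteriorAlgebra.liftAlternating
    (Pi.single m
      ((Matrix.detRowAlternating :
          (Fin m → F) [⋀^Fin m]→ₗ[F] F).compLinearMap
        (LinearMap.pi fun j => Module.Dual.eval F V (v j)))) Ψ

end Eval

/-!
If `φ v = 1`, then splitting a `k`-vector `X` as `X₁ ∧ v + X₂` along `ker φ` gives, up to sign,
`X₁ = φ ⌋ X`, while `X₂ = φ ⌋ (v ∧ X)`. Since `v ∧ X₁` has the same length as `X₁`, the invariants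
`m` and `r` of a nondegenerate `X` are the minimal lengths of `v ∧ (φ ⌋ X)` and `φ ⌋ (v ∧ X)` over
all `φ` and `v` with `φ v = 1`.

Up to sign, contraction into a volume form interchanges `v ∧ ·` and `v ⌋ ·`, for vectors as well
as for linear forms, and it preserves decomposability. It therefore swaps the two families above,
and hence `m` and `r`. It also swaps the nondegenerate `k`-vectors, annihilated by no contraction
with a nonzero linear form, with the indivisible ones, annihilated by no exterior multiplication
with a nonzero vector. The former are those of rank `n`, the latter those with `r > 0`.
-/

section ExteriorDuality

open ExteriorAlgebra

variable {F : Type*} [Field F] {M : Type*} [AddCommGroup M] [Module F M]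

section Contraction

theorem ι_mul_ι_mul_self (v : M) (X : ExteriorAlgebra F M) : ι F v * (ι F v * X) = 0 := by
  rw [← mul_assoc, ι_sq_zero, zero_mul]

theorem ι_mul_ι_mul_comm (v w : M) (X : ExteriorAlgebra F M) :
    ι F v * (ι F w * X) = -(ι F w * (ι F v * X)) := by
  rw [← mul_assoc, ← mul_assoc, eq_neg_of_add_eq_zero_left (ι_add_mul_swap v w), neg_mul]

theorem neg_one_pow_smul_smul (k : ℕ) (X : ExteriorAlgebra F M) :
    (-1 : F) ^ k • (-1 : F) ^ k • X = X := by
  rw [smul_smul, ← mul_pow, neg_one_mul, neg_neg, one_pow, one_smul]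

theorem exteriorAlgebra_left_induction {P : ExteriorAlgebra F M → Prop}
    (algebraMap : ∀ r : F, P (algebraMap F _ r))
    (add : ∀ X Y, P X → P Y → P (X + Y))
    (ι_mul : ∀ v X, P X → P (ι F v * X)) (X : ExteriorAlgebra F M) : P X :=
  CliffordAlgebra.left_induction 0 (P := P) algebraMap add (fun X v => ι_mul v X) X

/-- The contraction `φ ⌋ X` of `X` with a linear form `φ` in the first argument, i.e. the
antiderivation of the exterior algebra extending `φ`. -/
noncomputable def contract : Dual F M →ₗ[F] ExteriorAlgebra F M →ₗ[F] ExteriorAlgebra F M :=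
  CliffordAlgebra.contractLeft

local infixr:75 " ⌋ " => contract

theorem contract_algebraMap (φ : Dual F M) (r : F) :
    φ ⌋ (algebraMap F (ExteriorAlgebra F M) r) = 0 :=
  CliffordAlgebra.contractLeft_algebraMap _ φ r

theorem contract_ι (φ : Dual F M) (v : M) : φ ⌋ (ι F v) = algebraMap F _ (φ v) :=
  CliffordAlgebra.contractLeft_ι _ φ v

theorem contract_ι_mul (φ : Dual F M) (v : M) (X : ExteriorAlgebra F M) :
    φ ⌋ (ι F v * X) = φ v • X - ι F v * (φ ⌋ X) :=
  CliffordAlgebra.contractLeft_ι_mul φ v X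

theorem contract_contract (φ : Dual F M) (X : ExteriorAlgebra F M) : φ ⌋ φ ⌋ X = 0 :=
  CliffordAlgebra.contractLeft_contractLeft φ X

/-- The projection of `M` along `v`; if `φ v = 1`, then its image is `ker φ`. -/
def projKer (φ : Dual F M) (v : M) : M →ₗ[F] M :=
  LinearMap.id - φ.smulRight v

theorem projKer_apply (φ : Dual F M) (v w : M) : projKer φ v w = w - φ w • v := rfl

theorem map_projKer_le {φ : Dual F M} {v : M} (hφv : φ v = 1) {W : Submodule F M} (hv : v ∈ W) :
    W.map (projKer φ v) ≤ W ⊓ LinearMap.ker φ := by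
  rintro _ ⟨w, hw, rfl⟩
  exact ⟨sub_mem hw (W.smul_mem _ hv), by simp [projKer_apply, hφv]⟩

theorem contract_ι_mul_eq_map {φ : Dual F M} {v : M} (hφv : φ v = 1)
    (X : ExteriorAlgebra F M) : φ ⌋ (ι F v * X) = ExteriorAlgebra.map (projKer φ v) X := by
  induction X using exteriorAlgebra_left_induction with
  | algebraMap r => simp [contract_ι_mul, contract_algebraMap, hφv]
  | add X Y hX hY => rw [mul_add, map_add, map_add, hX, hY]
  | ι_mul w X hX =>
    rw [map_mul (ExteriorAlgebra.map _), map_apply_ι, projKer_apply, ← hX, map_sub, map_smul,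
      sub_mul, smul_mul_assoc]
    simp only [contract_ι_mul, hφv, one_smul, mul_sub, ι_mul_ι_mul_self, mul_smul_comm,
      ι_mul_ι_mul_comm w v, sub_zero]
    abel

theorem exists_dual_eq_one_le_ker {W : Submodule F M} {v : M} (hv : v ∉ W) :
    ∃ φ : Dual F M, φ v = 1 ∧ W ≤ LinearMap.ker φ := by
  obtain ⟨φ, hφv, hφW⟩ := Submodule.exists_le_ker_of_notMem hv
  exact ⟨(φ v)⁻¹ • φ, by simp [hφv], fun w hw => by simp [LinearMap.mem_ker.1 (hφW hw)]⟩

end Contraction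

section memPow

local infixr:75 " ⌋ " => contract

variable {W W' : Submodule F M} {k : ℕ} {X Y : ExteriorAlgebra F M} {φ : Dual F M} {v : M}

theorem memPow.induction {P : ℕ → ExteriorAlgebra F M → Prop}
    (algebraMap : ∀ r : F, P 0 (algebraMap F _ r))
    (add : ∀ k X Y, P k X → P k Y → P k (X + Y))
    (ι_mul : ∀ k, ∀ w ∈ W, ∀ X, memPow W k X → P k X → P (k + 1) (ι F w * X))
    (hX : memPow W k X) : P k X := by
  induction hX using Submodule.pow_induction_on_left' with
  | algebraMap r => exact algebraMap r
  | add X Y k _ _ hX hY => exact add k X Y hX hY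
  | mem_mul _ hw k X hX ih =>
    obtain ⟨w, hw, rfl⟩ := hw
    exact ι_mul k w hw X hX ih

theorem memPow_top_iff : memPow ⊤ k X ↔ X ∈ ⋀[F]^k M := by
  rw [memPow, Submodule.map_top]

theorem memPow_zero_iff : memPow W 0 X ↔ ∃ r : F, algebraMap F _ r = X := by
  rw [memPow, pow_zero, Submodule.mem_one]

theorem memPow_one_iff : memPow W 1 X ↔ ∃ w ∈ W, ι F w = X := by
  rw [memPow, pow_one, Submodule.mem_map]

theorem memPow.zero : memPow W k (0 : ExteriorAlgebra F M) :=
  Submodule.zero_mem _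

theorem memPow.add (hX : memPow W k X) (hY : memPow W k Y) : memPow W k (X + Y) :=
  Submodule.add_mem _ hX hY

theorem memPow.sub (hX : memPow W k X) (hY : memPow W k Y) : memPow W k (X - Y) :=
  Submodule.sub_mem _ hX hY

theorem memPow.smul (c : F) (hX : memPow W k X) : memPow W k (c • X) :=
  Submodule.smul_mem _ c hX

theorem memPow.ι_mul (hv : v ∈ W) (hX : memPow W k X) : memPow W (k + 1) (ι F v * X) := by
  rw [memPow, pow_succ']
  exact Submodule.mul_mem_mul ⟨v, hv, rfl⟩ hX

theorem memPow.mono (hX : memPow W k X) (h : W ≤ W') : memPow W' k X :=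
  pow_le_pow_left' (Submodule.map_mono h) k hX

theorem memPow.eq_zero_of_bot (hX : memPow ⊥ (k + 1) X) : X = 0 := by
  rwa [memPow, Submodule.map_bot, pow_succ', Submodule.bot_mul, Submodule.mem_bot] at hX

theorem memPow.map {N : Type*} [AddCommGroup N] [Module F N] (f : M →ₗ[F] N)
    (hX : memPow W k X) : memPow (W.map f) k (ExteriorAlgebra.map f X) := by
  rw [memPow, ← Submodule.map_comp, ← map_comp_ι, Submodule.map_comp, ← Submodule.map_pow]
  exact Submodule.mem_map_of_mem hX

theorem memPow.contract (φ : Dual F M) (hX : memPow W k X) :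
    memPow W (k - 1) (φ ⌋ X) := by
  refine hX.induction (P := fun k X => memPow W (k - 1) (φ ⌋ X)) (fun r => ?_)
    (fun k X Y hX hY => by rw [map_add]; exact hX.add hY) fun k w hw X hX ih => ?_
  · rw [contract_algebraMap]
    exact .zero
  · rw [contract_ι_mul]
    refine (hX.smul _).sub ?_
    obtain rfl | hk := k.eq_zero_or_pos
    · obtain ⟨r, rfl⟩ := memPow_zero_iff.1 hX
      rw [contract_algebraMap, mul_zero]
      exact .zero
    · simpa [Nat.sub_add_cancel hk] using ih.ι_mul hw

theorem memPow.contract_eq_zero (hX : memPow W k X) (hφ : W ≤ LinearMap.ker φ) : φ ⌋ X = 0 := by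
  refine hX.induction (P := fun _ X => φ ⌋ X = 0) (contract_algebraMap φ)
    (fun _ X Y hX hY => by rw [map_add, hX, hY, add_zero]) fun k w hw X _ hX => ?_
  rw [contract_ι_mul, hX, LinearMap.mem_ker.1 (hφ hw), zero_smul, mul_zero, sub_zero]

theorem memPow.mul_ι (hX : memPow W k X) (v : M) :
    X * ι F v = (-1 : F) ^ k • (ι F v * X) := by
  refine hX.induction (P := fun k X => X * ι F v = (-1 : F) ^ k • (ι F v * X)) ?_ ?_ ?_
  · exact fun r => by rw [pow_zero, one_smul, Algebra.commutes]
  · exact fun k X Y hX hY => by rw [add_mul, hX, hY, mul_add, smul_add]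
  · intro k w _ X _ hX
    rw [mul_assoc, hX, mul_smul_comm, ι_mul_ι_mul_comm, pow_succ, mul_neg_one, neg_smul, smul_neg]

theorem memPow.contract_ι_mul_inf_ker (hX : memPow W k X) (hφv : φ v = 1) (hv : v ∈ W) :
    memPow (W ⊓ LinearMap.ker φ) k (φ ⌋ (ι F v * X)) := by
  rw [contract_ι_mul_eq_map hφv]
  exact (hX.map _).mono (map_projKer_le hφv hv)

theorem memPow.inf_ker (hX : memPow W k X) (hφv : φ v = 1) (hv : v ∈ W) (hφX : φ ⌋ X = 0) :
    memPow (W ⊓ LinearMap.ker φ) k X := by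
  have h := hX.contract_ι_mul_inf_ker hφv hv
  rwa [contract_ι_mul, hφv, hφX, one_smul, mul_zero, sub_zero] at h

end memPow

section Support

local infixr:75 " ⌋ " => contract

variable {k : ℕ} {X : ExteriorAlgebra F M} {W : Submodule F M}

theorem supp_le_of_memPow (hX : memPow W k X) : supp k X ≤ W :=
  sInf_le hX

theorem memPow_supp [FiniteDimensional F M] (hX : memPow ⊤ k X) : memPow (supp k X) k X := by
  obtain ⟨W, hXW, hmin⟩ := wellFounded_lt.has_min {W | memPow W k X} ⟨⊤, hX⟩
  suffices W ≤ supp k X from hXW.mono this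
  refine le_sInf fun W' hXW' => ?_
  by_contra hW
  obtain ⟨w, hw, hw'⟩ := Set.not_subset.1 hW
  obtain ⟨φ, hφw, hφW'⟩ := exists_dual_eq_one_le_ker hw'
  refine hmin _ (hXW.inf_ker hφw hw (hXW'.contract_eq_zero hφW')) (inf_lt_left.2 fun h => ?_)
  exact one_ne_zero (hφw.symm.trans (h hw))

theorem supp_le_ker_iff [FiniteDimensional F M] (hX : memPow ⊤ k X) {φ : Dual F M} :
    supp k X ≤ LinearMap.ker φ ↔ φ ⌋ X = 0 := by
  refine ⟨(memPow_supp hX).contract_eq_zero, fun h => ?_⟩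
  obtain rfl | hφ := eq_or_ne φ 0
  · simp
  obtain ⟨v, hv⟩ := LinearMap.surjective hφ 1
  exact supp_le_of_memPow ((hX.inf_ker hv trivial h).mono inf_le_right)

theorem memPow.eq_zero_of_contract [FiniteDimensional F M] (hX : memPow ⊤ (k + 1) X)
    (h : ∀ φ : Dual F M, φ ⌋ X = 0) : X = 0 := by
  have hsupp : supp (k + 1) X = ⊥ := by
    refine eq_bot_iff.2 fun v hv => (forall_dual_apply_eq_zero_iff F v).1 fun φ => ?_
    exact (supp_le_ker_iff hX).2 (h φ) hv
  exact (hsupp ▸ memPow_supp hX).eq_zero_of_bot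

/-- `X` is nondegenerate if it is not annihilated by contraction with a nonzero linear form,
i.e. if its support is the whole space. -/
def IsNondegenerate (X : ExteriorAlgebra F M) : Prop :=
  ∀ φ : Dual F M, φ ⌋ X = 0 → φ = 0

/-- `X` is indivisible if it is not annihilated by exterior multiplication with a nonzero vector,
i.e. if it is not an exterior multiple of a nonzero vector. -/
def IsIndivisible (X : ExteriorAlgebra F M) : Prop :=
  ∀ v : M, ι F v * X = 0 → v = 0

theorem supp_eq_top_iff [FiniteDimensional F M] (hX : memPow ⊤ k X) :
    supp k X = ⊤ ↔ IsNondegenerate X := by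
  refine ⟨fun h φ hφ => LinearMap.ker_eq_top.1 ?_, fun h => by_contra fun hne => ?_⟩
  · exact top_le_iff.1 (h ▸ (supp_le_ker_iff hX).2 hφ)
  · obtain ⟨φ, hφ, hle⟩ := Submodule.exists_le_ker_of_lt_top _ (lt_top_iff_ne_top.2 hne)
    exact hφ (h φ ((supp_le_ker_iff hX).1 hle))

theorem rkInv_eq_finrank_iff [FiniteDimensional F M] (hX : memPow ⊤ k X) :
    rkInv k X = finrank F M ↔ IsNondegenerate X := by
  rw [← supp_eq_top_iff hX]
  exact ⟨Submodule.eq_top_of_finrank_eq, fun h => by rw [rkInv, h, finrank_top]⟩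

theorem IsNondegenerate.degree_ne_zero [Nontrivial M] (h : IsNondegenerate X)
    (hX : memPow ⊤ k X) : k ≠ 0 := by
  rintro rfl
  obtain ⟨r, rfl⟩ := memPow_zero_iff.1 hX
  obtain ⟨φ, hφ⟩ := exists_ne (0 : Dual F M)
  exact hφ (h φ (contract_algebraMap φ r))

theorem IsIndivisible.degree_ne_one [Nontrivial M] (h : IsIndivisible X)
    (hX : memPow ⊤ k X) : k ≠ 1 := by
  rintro rfl
  obtain ⟨v, -, rfl⟩ := memPow_one_iff.1 hX
  obtain rfl : v = 0 := h v (ι_sq_zero v)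
  obtain ⟨w, hw⟩ := exists_ne (0 : M)
  exact hw (h w (by simp))

end Support

section Length

local infixr:75 " ⌋ " => contract

variable {N : Type*} [AddCommGroup N] [Module F N] {k l : ℕ} {X : ExteriorAlgebra F M}

theorem dec_top_zero_iff : Dec ⊤ 0 X ↔ X = 1 := by
  simp [Dec]

theorem dec_top_succ_iff : Dec ⊤ (k + 1) X ↔ ∃ v Y, Dec ⊤ k Y ∧ X = ι F v * Y := by
  constructor
  · rintro ⟨v, -, rfl⟩
    exact ⟨v 0, _, ⟨Fin.tail v, by simp, rfl⟩, by simp [List.ofFn_succ, Fin.tail]⟩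
  · rintro ⟨v, _, ⟨w, -, rfl⟩, rfl⟩
    exact ⟨Fin.cons v w, by simp, by simp [List.ofFn_succ]⟩

theorem dec_top_one (v : M) : Dec ⊤ 1 (ι F v) :=
  dec_top_succ_iff.2 ⟨v, 1, dec_top_zero_iff.2 rfl, (mul_one _).symm⟩

theorem Dec.ι_mul (v : M) (hX : Dec ⊤ k X) : Dec ⊤ (k + 1) (ι F v * X) :=
  dec_top_succ_iff.2 ⟨v, X, hX, rfl⟩

theorem Dec.smul (c : F) (hX : Dec ⊤ (k + 1) X) : Dec ⊤ (k + 1) (c • X) := by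
  obtain ⟨v, Y, hY, rfl⟩ := dec_top_succ_iff.1 hX
  simpa using hY.ι_mul (c • v)

theorem Dec.map (f : M →ₗ[F] N) (hX : Dec ⊤ k X) : Dec ⊤ k (ExteriorAlgebra.map f X) := by
  obtain ⟨v, -, rfl⟩ := hX
  refine ⟨f ∘ v, by simp, ?_⟩
  rw [map_list_prod, List.map_ofFn]
  simp [Function.comp_def]

theorem Dec.contract (φ : Dual F M) (hX : Dec ⊤ (k + 2) X) : Dec ⊤ (k + 1) (φ ⌋ X) := by
  induction k generalizing X with
  | zero =>
    obtain ⟨v, Y, hY, rfl⟩ := dec_top_succ_iff.1 hX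
    obtain ⟨w, Z, hZ, rfl⟩ := dec_top_succ_iff.1 hY
    obtain rfl := dec_top_zero_iff.1 hZ
    convert dec_top_one (φ v • w - φ w • v) using 1
    simp [contract_ι_mul, contract_ι, ← Algebra.commutes, ← Algebra.smul_def]
  | succ k ih =>
    obtain ⟨v, Y, hY, rfl⟩ := dec_top_succ_iff.1 hX
    obtain hv | hv := eq_or_ne (φ v) 0
    · rw [contract_ι_mul, hv, zero_smul, zero_sub, ← neg_mul, ← map_neg]
      exact (ih hY).ι_mul (-v)
    · rw [← smul_inv_smul₀ hv v, map_smul (ι F), smul_mul_assoc, map_smul,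
        contract_ι_mul_eq_map (by simp [hv])]
      exact (hY.map _).smul _

theorem dec_top_ιMulti (v : Fin k → M) : Dec ⊤ k (ιMulti F k v) :=
  ⟨v, by simp, ιMulti_apply v⟩

theorem Dec.memPow (hX : Dec ⊤ k X) : memPow ⊤ k X := by
  obtain ⟨v, -, rfl⟩ := hX
  rw [memPow_top_iff, ← ιMulti_apply]
  exact ιMulti_range F k ⟨v, rfl⟩

theorem LenLE.map {j : ℕ} (hX : LenLE ⊤ k l X) (f : ExteriorAlgebra F M →ₗ[F] ExteriorAlgebra F N)
    (hf : ∀ Y, Dec ⊤ k Y → Dec ⊤ j (f Y)) : LenLE ⊤ j l (f X) := by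
  obtain ⟨Y, hY, rfl⟩ := hX
  exact ⟨fun i => f (Y i), fun i => hf _ (hY i), map_sum f Y _⟩

theorem lenLE_ι_mul_contract_iff {φ : Dual F M} {v : M} (hφv : φ v = 1) :
    LenLE ⊤ (k + 2) l (ι F v * (φ ⌋ X)) ↔ LenLE ⊤ (k + 1) l (φ ⌋ X) := by
  refine ⟨fun h => ?_, fun h => h.map (LinearMap.mulLeft F (ι F v)) fun _ => Dec.ι_mul v⟩
  have hφ : φ ⌋ (ι F v * (φ ⌋ X)) = φ ⌋ X := by
    rw [contract_ι_mul, contract_contract, hφv, one_smul, mul_zero, sub_zero]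
  exact hφ ▸ h.map (contract φ) fun _ => Dec.contract φ

theorem LenLE.smul (c : F) (hX : LenLE ⊤ (k + 1) l X) : LenLE ⊤ (k + 1) l (c • X) :=
  hX.map (LinearMap.lsmul F _ c) fun _ hY => hY.smul c

theorem lenLE_top_zero_iff : LenLE (⊤ : Submodule F M) k 0 X ↔ X = 0 := by
  simp [LenLE]

theorem lenLE_neg_one_pow_smul_iff {j : ℕ} :
    LenLE ⊤ (k + 1) l ((-1 : F) ^ j • X) ↔ LenLE ⊤ (k + 1) l X := by
  refine ⟨fun h => ?_, .smul _⟩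
  rw [← neg_one_pow_smul_smul j X]
  exact h.smul _

theorem LenLE.add {l' : ℕ} {Y : ExteriorAlgebra F M} (hX : LenLE ⊤ k l X) (hY : LenLE ⊤ k l' Y) :
    LenLE ⊤ k (l + l') (X + Y) := by
  obtain ⟨Z, hZ, rfl⟩ := hX
  obtain ⟨Z', hZ', rfl⟩ := hY
  refine ⟨Fin.append Z Z', Fin.addCases (fun i => ?_) fun i => ?_, by simp [Fin.sum_univ_add]⟩
  · simpa using hZ i
  · simpa using hZ' i

theorem memPow.exists_lenLE (hX : memPow ⊤ (k + 1) X) : ∃ l, LenLE ⊤ (k + 1) l X := by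
  rw [memPow_top_iff, ← ιMulti_span_fixedDegree] at hX
  induction hX using Submodule.span_induction with
  | mem X hX =>
    obtain ⟨v, rfl⟩ := hX
    exact ⟨1, fun _ => ιMulti F _ v, fun _ => dec_top_ιMulti v, by simp⟩
  | zero => exact ⟨0, lenLE_top_zero_iff.2 rfl⟩
  | add X Y _ _ hX hY =>
    obtain ⟨l, hl⟩ := hX
    obtain ⟨l', hl'⟩ := hY
    exact ⟨l + l', hl.add hl'⟩
  | smul c X _ hX =>
    obtain ⟨l, hl⟩ := hX
    exact ⟨l, hl.smul c⟩

theorem LenLE.exists_hasLen {A : Submodule F M} (hX : LenLE A k l X) :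
    ∃ l' ≤ l, HasLen A k l' X := by
  classical
  have h : ∃ j, LenLE A k j X := ⟨l, hX⟩
  exact ⟨Nat.find h, Nat.find_min' h hX, Nat.find_spec h, fun _ => Nat.find_min h⟩

end Length

section Splitting

local infixr:75 " ⌋ " => contract

variable {k l : ℕ} {X X₁ X₂ : ExteriorAlgebra F M} {φ : Dual F M} {v : M} {W : Submodule F M}

theorem inf_ker_sup_span_singleton (hφv : φ v = 1) (hv : v ∈ W) :
    W ⊓ LinearMap.ker φ ⊔ F ∙ v = W := by
  rw [sup_comm, inf_comm, ← sup_inf_assoc_of_le _ ((Submodule.span_singleton_le_iff_mem v W).2 hv),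
    φ.span_singleton_sup_ker_eq_top (by simp [hφv]), top_inf_eq]

theorem inf_ker_inf_span_singleton (hφv : φ v = 1) : W ⊓ LinearMap.ker φ ⊓ F ∙ v = ⊥ :=
  (Submodule.disjoint_span_singleton_of_notMem fun h => by simp_all).eq_bot

theorem split_contract [FiniteDimensional F M] (hX : memPow ⊤ k X) (hφv : φ v = 1)
    (hv : v ∈ supp k X) :
    Split k X v (supp k X ⊓ LinearMap.ker φ) ((-1 : F) ^ (k - 1) • φ ⌋ X) (φ ⌋ (ι F v * X)) := by
  have hφX : memPow (supp k X) (k - 1) (φ ⌋ X) := (memPow_supp hX).contract φ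
  refine ⟨hv, fun h => by simp [h] at hφv, inf_ker_sup_span_singleton hφv hv,
    inf_ker_inf_span_singleton hφv, (hφX.inf_ker hφv hv (contract_contract φ X)).smul _,
    (memPow_supp hX).contract_ι_mul_inf_ker hφv hv, ?_⟩
  rw [smul_mul_assoc, hφX.mul_ι, neg_one_pow_smul_smul, contract_ι_mul, hφv, one_smul,
    add_sub_cancel]

theorem Split.exists_contract (h : Split k X v W X₁ X₂) :
    ∃ φ : Dual F M, φ v = 1 ∧ X₁ = (-1 : F) ^ (k - 1) • φ ⌋ X ∧ X₂ = φ ⌋ (ι F v * X) := by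
  obtain ⟨-, hv, -, hWv, hX₁, hX₂, rfl⟩ := h
  obtain ⟨φ, hφv, hφW⟩ := exists_dual_eq_one_le_ker
    ((Submodule.disjoint_span_singleton' hv).1 (disjoint_iff.2 hWv))
  refine ⟨φ, hφv, ?_, ?_⟩
  · rw [map_add, hX₂.contract_eq_zero hφW, hX₁.mul_ι, map_smul, contract_ι_mul, hφv,
      hX₁.contract_eq_zero hφW, one_smul, mul_zero, sub_zero, add_zero, neg_one_pow_smul_smul]
  · rw [mul_add, hX₁.mul_ι, mul_smul_comm, ι_mul_ι_mul_self, smul_zero, zero_add, contract_ι_mul,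
      hφv, hX₂.contract_eq_zero hφW, one_smul, mul_zero, sub_zero]

theorem Split.ι_mul_eq_zero_iff (h : Split k X v W X₁ X₂) : ι F v * X = 0 ↔ X₂ = 0 := by
  obtain ⟨φ, hφv, -, rfl⟩ := h.exists_contract
  refine ⟨fun hvX => by rw [hvX, map_zero], fun hφ => ?_⟩
  rw [contract_ι_mul, hφv, one_smul, sub_eq_zero] at hφ
  rw [hφ, ι_mul_ι_mul_self]

theorem sInf_eq_sInf_of_subset {S T : Set ℕ} (hST : S ⊆ T) (h : ∀ l ∈ T, ∃ j ≤ l, j ∈ S) :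
    sInf S = sInf T := by
  simpa using monotone_id.monotoneOn T |>.csInf_eq_of_subset_of_forall_exists_le
    (OrderBot.bddBelow _) hST (fun l hl => by simpa [and_comm] using h l hl)

theorem mInv_eq_sInf [FiniteDimensional F M] (hX : memPow ⊤ (k + 2) X) (h : IsNondegenerate X) :
    mInv ⊤ (k + 2) X =
      sInf {l | ∃ (φ : Dual F M) (v : M), φ v = 1 ∧ LenLE ⊤ (k + 1) l (φ ⌋ X)} := by
  refine sInf_eq_sInf_of_subset ?_ ?_
  · rintro l ⟨v, W, X₁, X₂, hsplit, hl, -⟩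
    obtain ⟨φ, hφv, rfl, -⟩ := hsplit.exists_contract
    exact ⟨φ, v, hφv, lenLE_neg_one_pow_smul_iff.1 hl⟩
  · rintro l ⟨φ, v, hφv, hl⟩
    obtain ⟨j, hjl, hj⟩ := (lenLE_neg_one_pow_smul_iff.2 hl).exists_hasLen
    exact ⟨j, hjl, v, _, _, _, split_contract hX hφv ((supp_eq_top_iff hX).2 h ▸ trivial), hj⟩

theorem rInv_eq_sInf [FiniteDimensional F M] (hX : memPow ⊤ k X) (h : IsNondegenerate X) :
    rInv ⊤ k X =
      sInf {l | ∃ (φ : Dual F M) (v : M), φ v = 1 ∧ LenLE ⊤ k l (φ ⌋ (ι F v * X))} := by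
  refine sInf_eq_sInf_of_subset ?_ ?_
  · rintro l ⟨v, W, X₁, X₂, hsplit, hl, -⟩
    obtain ⟨φ, hφv, -, rfl⟩ := hsplit.exists_contract
    exact ⟨φ, v, hφv, hl⟩
  · rintro l ⟨φ, v, hφv, hl⟩
    obtain ⟨j, hjl, hj⟩ := hl.exists_hasLen
    exact ⟨j, hjl, v, _, _, _, split_contract hX hφv ((supp_eq_top_iff hX).2 h ▸ trivial), hj⟩

theorem mem_supp_of_ι_mul_eq_zero [FiniteDimensional F M] (hX : memPow ⊤ k X) (hX0 : X ≠ 0)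
    (hvX : ι F v * X = 0) : v ∈ supp k X := by
  by_contra hv
  obtain ⟨φ, hφv, hφ⟩ := exists_dual_eq_one_le_ker hv
  have h := contract_ι_mul φ v X
  rw [hvX, (supp_le_ker_iff hX).1 hφ, hφv, map_zero, one_smul, mul_zero, sub_zero] at h
  exact hX0 h.symm

theorem IsIndivisible.of_rInv_pos [FiniteDimensional F M] (hX : memPow ⊤ k X)
    (hr : 0 < rInv ⊤ k X) : IsIndivisible X := by
  have hsplit : ∀ v W X₁ X₂, Split k X v W X₁ X₂ → X₂ ≠ 0 := fun v W X₁ X₂ h hX₂ =>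
    hr.not_ge (Nat.sInf_le ⟨v, W, X₁, X₂, h, lenLE_top_zero_iff.2 hX₂, by simp⟩)
  obtain ⟨l, v, W, X₁, X₂, h, -⟩ := Nat.nonempty_of_pos_sInf hr
  have hX0 : X ≠ 0 := by
    rintro rfl
    exact hsplit _ _ _ _ h (h.ι_mul_eq_zero_iff.1 (mul_zero _))
  refine fun w hwX => by_contra fun hw => ?_
  obtain ⟨φ, hφw⟩ := Projective.exists_dual_eq_one F hw
  have hw := split_contract hX hφw (mem_supp_of_ι_mul_eq_zero hX hX0 hwX)
  exact hsplit _ _ _ _ hw (hw.ι_mul_eq_zero_iff.1 hwX)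

theorem IsIndivisible.rInv_pos [FiniteDimensional F M] [Nontrivial M] (h : IsIndivisible X)
    (hk : 1 ≤ k) (hX : memPow ⊤ k X) : 0 < rInv ⊤ k X := by
  obtain ⟨k, rfl⟩ := Nat.exists_eq_add_of_le' hk
  refine Nat.pos_of_ne_zero fun hr => ?_
  obtain ⟨v, W, X₁, X₂, hsplit, hl, -⟩ | hempty := Nat.sInf_eq_zero.1 hr
  · exact hsplit.2.1 (h v (hsplit.ι_mul_eq_zero_iff.2 (lenLE_top_zero_iff.1 hl)))
  · have hsupp : supp (k + 1) X ≠ ⊥ := fun hbot => by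
      have hXbot := memPow_supp hX
      rw [hbot] at hXbot
      obtain ⟨w, hw⟩ := exists_ne (0 : M)
      exact hw (h w (by rw [hXbot.eq_zero_of_bot, mul_zero]))
    obtain ⟨v, hv, hv0⟩ := Submodule.exists_mem_ne_zero_of_ne_bot hsupp
    obtain ⟨φ, hφv⟩ := Projective.exists_dual_eq_one F hv0
    have hsplit := split_contract hX hφv hv
    obtain ⟨l, hl⟩ := ((memPow_supp hX).contract_ι_mul_inf_ker hφv hv |>.mono le_top).exists_lenLE
    obtain ⟨j, -, hj⟩ := hl.exists_hasLen
    exact hempty.le ⟨v, _, _, _, hsplit, hj⟩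

end Splitting

section TopDegree

variable [FiniteDimensional F M]

theorem exists_memPow_finrank_ne_zero :
    ∃ X : ExteriorAlgebra F M, memPow ⊤ (finrank F M) X ∧ X ≠ 0 := by
  have h : 0 < finrank F (⋀[F]^(finrank F M) M) := by simp [exteriorPower.finrank_eq]
  have := nontrivial_of_finrank_pos h
  obtain ⟨X, hX⟩ := exists_ne (0 : ⋀[F]^(finrank F M) M)
  exact ⟨X, memPow_top_iff.2 X.2, by simpa using hX⟩

theorem memPow.ι_mul_eq_zero {X : ExteriorAlgebra F M} (hX : memPow ⊤ (finrank F M) X) (v : M) :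
    ι F v * X = 0 := by
  have h : ⋀[F]^(finrank F M + 1) M = ⊥ :=
    Submodule.finrank_eq_zero.1 (by simp [exteriorPower.finrank_eq])
  simpa [memPow_top_iff, h] using hX.ι_mul (Submodule.mem_top (x := v))

theorem memPow.dec_of_finrank {n : ℕ} {X : ExteriorAlgebra F M} (hn : finrank F M = n + 1)
    (hX : memPow ⊤ (n + 1) X) : Dec ⊤ (n + 1) X := by
  obtain rfl | hX0 := eq_or_ne X 0
  · simpa using (dec_top_ιMulti (F := F) (0 : Fin (n + 1) → M)).smul 0
  obtain ⟨v, hv⟩ : ∃ v : Fin (n + 1) → M, ιMulti F (n + 1) v ≠ 0 := by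
    by_contra! h
    rw [memPow_top_iff, ← ιMulti_span_fixedDegree] at hX
    refine hX0 (Submodule.span_le.2 ?_ hX : X ∈ (⊥ : Submodule F _))
    rintro _ ⟨v, rfl⟩
    exact h v
  have h1 : finrank F (⋀[F]^(n + 1) M) = 1 := by simp [exteriorPower.finrank_eq, hn]
  obtain ⟨c, hc⟩ := (finrank_eq_one_iff_of_nonzero' (exteriorPower.ιMulti F (n + 1) v)
    (by simpa [Subtype.ext_iff] using hv)).1 h1 ⟨X, memPow_top_iff.1 hX⟩
  have hcX : c • ιMulti F (n + 1) v = X := congrArg Subtype.val hc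
  exact hcX ▸ (dec_top_ιMulti v).smul c

end TopDegree

section PoincareDuality

local infixr:75 " ⌋ " => contract

variable {N : Type*} [AddCommGroup N] [Module F N]

/-- `D` is a Poincaré isomorphism for the pairing `p`: it interchanges exterior multiplication by
vectors and contraction with linear forms, and it maps `1` to an element of top degree. The
dual isomorphism `X ↦ X ⌟ vol` is of this kind. -/
structure IsPoincareDuality (p : M →ₗ[F] N →ₗ[F] F)
    (D : ExteriorAlgebra F M ≃ₗ[F] ExteriorAlgebra F N) : Prop where
  map_ι_mul : ∀ v X, D (ι F v * X) = p v ⌋ D X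
  map_contract : ∀ w X, D (p.flip w ⌋ X) = ι F w * D X
  memPow_map_one : memPow ⊤ (finrank F N) (D 1)

namespace IsPoincareDuality

variable {p : M →ₗ[F] N →ₗ[F] F} {D : ExteriorAlgebra F M ≃ₗ[F] ExteriorAlgebra F N}
  {k l : ℕ} {X : ExteriorAlgebra F M}

theorem memPow_map (hD : IsPoincareDuality p D) (hX : memPow ⊤ k X) :
    memPow ⊤ (finrank F N - k) (D X) := by
  refine hX.induction (P := fun k X => memPow ⊤ (finrank F N - k) (D X)) ?_ ?_ ?_
  · intro r
    rw [Algebra.algebraMap_eq_smul_one, map_smul, Nat.sub_zero]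
    exact hD.memPow_map_one.smul r
  · exact fun k X Y hX hY => by rw [map_add]; exact hX.add hY
  · exact fun k v _ X _ hX => by rw [hD.map_ι_mul]; exact hX.contract (p v)

theorem symm [FiniteDimensional F M] [p.IsPerfPair] (hD : IsPoincareDuality p D) :
    IsPoincareDuality p.flip D.symm where
  map_ι_mul w Y := by rw [LinearEquiv.symm_apply_eq, hD.map_contract, LinearEquiv.apply_symm_apply]
  map_contract v Y := by
    rw [LinearEquiv.symm_apply_eq, hD.map_ι_mul, LinearEquiv.apply_symm_apply, LinearMap.flip_flip]
  memPow_map_one := by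
    obtain ⟨X, hX, hX0⟩ := exists_memPow_finrank_ne_zero (F := F) (M := M)
    have hDX := hD.memPow_map hX
    rw [finrank_of_isPerfPair p, Nat.sub_self, memPow_zero_iff] at hDX
    obtain ⟨r, hr⟩ := hDX
    rw [Algebra.algebraMap_eq_smul_one] at hr
    have hr0 : r ≠ 0 := by
      rintro rfl
      exact hX0 (D.map_eq_zero_iff.1 (by rw [← hr, zero_smul]))
    rw [← inv_smul_smul₀ hr0 (1 : ExteriorAlgebra F N), hr, map_smul, LinearEquiv.symm_apply_apply]
    exact hX.smul _

theorem dec_map [FiniteDimensional F N] (hD : IsPoincareDuality p D) (hX : Dec ⊤ k X)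
    (hk : k < finrank F N) : Dec ⊤ (finrank F N - k) (D X) := by
  obtain ⟨d, hd⟩ := Nat.exists_eq_add_of_lt hk
  rw [show finrank F N - k = d + 1 by omega]
  induction k generalizing d X with
  | zero =>
    obtain rfl := dec_top_zero_iff.1 hX
    rw [zero_add] at hd
    exact (hd ▸ hD.memPow_map_one).dec_of_finrank hd
  | succ k ih =>
    obtain ⟨v, Y, hY, rfl⟩ := dec_top_succ_iff.1 hX
    rw [hD.map_ι_mul]
    exact (ih hY (by omega) (d + 1) (by omega)).contract (p v)

theorem lenLE_map [FiniteDimensional F N] (hD : IsPoincareDuality p D) (hX : LenLE ⊤ k l X)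
    (hk : k < finrank F N) : LenLE ⊤ (finrank F N - k) l (D X) :=
  hX.map D.toLinearMap fun _ hY => hD.dec_map hY hk

theorem lenLE_map_iff [FiniteDimensional F M] [FiniteDimensional F N] [p.IsPerfPair]
    (hD : IsPoincareDuality p D) (hk0 : 0 < k) (hk : k < finrank F N) :
    LenLE ⊤ (finrank F N - k) l (D X) ↔ LenLE ⊤ k l X := by
  refine ⟨fun h => ?_, fun h => hD.lenLE_map h hk⟩
  have h' := hD.symm.lenLE_map h (by rw [finrank_of_isPerfPair p]; omega)
  rwa [D.symm_apply_apply, finrank_of_isPerfPair p, Nat.sub_sub_self hk.le] at h'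

theorem isNondegenerate_map_iff [p.IsPerfPair] (hD : IsPoincareDuality p D) :
    IsNondegenerate (D X) ↔ IsIndivisible X := by
  rw [IsNondegenerate, ← p.toPerfPair.forall_congr_right]
  simp [IsIndivisible, ← hD.map_ι_mul,
    map_eq_zero_iff p (LinearMap.IsPerfPair.bijective_left p).injective]

theorem isIndivisible_map_iff [FiniteDimensional F M] [p.IsPerfPair] (hD : IsPoincareDuality p D) :
    IsIndivisible (D X) ↔ IsNondegenerate X := by
  rw [← hD.symm.isNondegenerate_map_iff, D.symm_apply_apply]

theorem contract_ι_mul_map (hD : IsPoincareDuality p D) (v : M) (w : N) :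
    p v ⌋ (ι F w * D X) = D (ι F v * (p.flip w ⌋ X)) := by
  rw [hD.map_ι_mul, hD.map_contract]

theorem degree_lt_finrank [Nontrivial M] [p.IsPerfPair] (hD : IsPoincareDuality p D)
    (hX : memPow ⊤ k X) (h : IsIndivisible X) : k < finrank F N := by
  have : Nontrivial N := p.flip.toPerfPair.toEquiv.nontrivial
  exact Nat.lt_of_sub_ne_zero ((hD.isNondegenerate_map_iff.2 h).degree_ne_zero (hD.memPow_map hX))

theorem rInv_map [FiniteDimensional F M] [FiniteDimensional F N] [Nontrivial M] [p.IsPerfPair]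
    (hD : IsPoincareDuality p D) (hX : memPow ⊤ k X) (hnd : IsNondegenerate X)
    (hind : IsIndivisible X) : rInv ⊤ (finrank F N - k) (D X) = mInv ⊤ k X := by
  have hk := hD.degree_lt_finrank hX hind
  obtain ⟨j, rfl⟩ : ∃ j, k = j + 2 := Nat.exists_eq_add_of_le'
    ((Nat.two_le_iff k).2 ⟨hnd.degree_ne_zero hX, hind.degree_ne_one hX⟩)
  rw [rInv_eq_sInf (hD.memPow_map hX) (hD.isNondegenerate_map_iff.2 hind), mInv_eq_sInf hX hnd]
  refine congrArg sInf (Set.ext fun l => ?_)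
  rw [Set.mem_ofPred_eq, Set.mem_ofPred_eq,
    (LinearMap.IsPerfPair.bijective_left p).surjective.exists, exists_comm,
    (LinearMap.IsPerfPair.bijective_right p).surjective.exists]
  refine exists₂_congr fun w v => and_congr_right fun hvw => ?_
  rw [hD.contract_ι_mul_map, hD.lenLE_map_iff (by omega) hk,
    lenLE_ι_mul_contract_iff (φ := p.flip w) hvw]

theorem mInv_map [FiniteDimensional F M] [FiniteDimensional F N] [Nontrivial M] [p.IsPerfPair]
    (hD : IsPoincareDuality p D) (hX : memPow ⊤ k X) (hnd : IsNondegenerate X)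
    (hind : IsIndivisible X) : mInv ⊤ (finrank F N - k) (D X) = rInv ⊤ k X := by
  have : Nontrivial N := p.flip.toPerfPair.toEquiv.nontrivial
  have h := hD.symm.rInv_map (hD.memPow_map hX) (hD.isNondegenerate_map_iff.2 hind)
    (hD.isIndivisible_map_iff.2 hnd)
  rw [D.symm_apply_apply, finrank_of_isPerfPair p,
    Nat.sub_sub_self (hD.degree_lt_finrank hX hind).le] at h
  exact h.symm

end IsPoincareDuality

end PoincareDuality

section Construction

local infixr:75 " ⌋ " => contract

variable {N : Type*} [AddCommGroup N] [Module F N] (p : M →ₗ[F] N →ₗ[F] F)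

/-- The action of the exterior algebra of `M` on the one of `N` in which a vector `v` acts by
contraction with `p v`. Acting on an element of top degree gives the Poincaré isomorphism. -/
noncomputable def contractAction :
    ExteriorAlgebra F M →ₐ[F] Module.End F (ExteriorAlgebra F N) :=
  ExteriorAlgebra.lift F
    ⟨contract ∘ₗ p, fun v => LinearMap.ext fun Y => contract_contract (p v) Y⟩

theorem contractAction_ι_mul (v : M) (X : ExteriorAlgebra F M) (Y : ExteriorAlgebra F N) :
    contractAction p (ι F v * X) Y = p v ⌋ contractAction p X Y := by
  rw [map_mul, contractAction, lift_ι_apply]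
  rfl

theorem contractAction_mul_ι (X : ExteriorAlgebra F M) (v : M) (Y : ExteriorAlgebra F N) :
    contractAction p (X * ι F v) Y = contractAction p X (p v ⌋ Y) := by
  rw [map_mul, Module.End.mul_apply, contractAction, lift_ι_apply]
  rfl

theorem contractAction_algebraMap (r : F) (Y : ExteriorAlgebra F N) :
    contractAction p (algebraMap F _ r) Y = r • Y := by
  rw [AlgHom.commutes, Module.algebraMap_end_apply]

variable [FiniteDimensional F N]

theorem contractAction_contract {ω : ExteriorAlgebra F N} (hω : memPow ⊤ (finrank F N) ω)
    (w : N) (X : ExteriorAlgebra F M) :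
    contractAction p (p.flip w ⌋ X) ω = ι F w * contractAction p X ω := by
  induction X using exteriorAlgebra_left_induction with
  | algebraMap r =>
    rw [contract_algebraMap, contractAction_algebraMap, mul_smul_comm, hω.ι_mul_eq_zero, map_zero,
      LinearMap.zero_apply, smul_zero]
  | add X Y hX hY =>
    rw [map_add, map_add, map_add, LinearMap.add_apply, LinearMap.add_apply, hX, hY, mul_add]
  | ι_mul v X hX =>
    rw [contract_ι_mul, map_sub, map_smul, LinearMap.sub_apply, LinearMap.smul_apply,
      contractAction_ι_mul, contractAction_ι_mul, hX, contract_ι_mul, LinearMap.flip_apply,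
      sub_sub_cancel]

theorem one_mem_of_contract_mem {S : Submodule F (ExteriorAlgebra F N)}
    (hS : ∀ φ, ∀ Y ∈ S, φ ⌋ Y ∈ S) {k : ℕ} {Y : ExteriorAlgebra F N} (hY : memPow ⊤ k Y)
    (hY0 : Y ≠ 0) (hYS : Y ∈ S) : 1 ∈ S := by
  induction k generalizing Y with
  | zero =>
    obtain ⟨r, rfl⟩ := memPow_zero_iff.1 hY
    rw [Algebra.algebraMap_eq_smul_one] at hYS hY0
    exact (S.smul_mem_iff (left_ne_zero_of_smul hY0)).1 hYS
  | succ k ih =>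
    obtain ⟨φ, hφ⟩ : ∃ φ : Dual F N, φ ⌋ Y ≠ 0 := by
      by_contra! h
      exact hY0 (hY.eq_zero_of_contract h)
    exact ih (hY.contract φ) hφ (hS φ Y hYS)

theorem contractAction_surjective [p.IsPerfPair] {ω : ExteriorAlgebra F N}
    (hω : memPow ⊤ (finrank F N) ω) (hω0 : ω ≠ 0) :
    Function.Surjective ((contractAction p).toLinearMap.flip ω) := by
  set f := (contractAction p).toLinearMap.flip ω
  have hcontract : ∀ φ, ∀ Y ∈ LinearMap.range f, φ ⌋ Y ∈ LinearMap.range f := by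
    rintro φ _ ⟨X, rfl⟩
    obtain ⟨v, rfl⟩ := p.toPerfPair.surjective φ
    exact ⟨ι F v * X, contractAction_ι_mul p v X ω⟩
  have hone : 1 ∈ LinearMap.range f :=
    one_mem_of_contract_mem hcontract hω hω0 ⟨1, by simp [f]⟩
  intro Y
  induction Y using exteriorAlgebra_left_induction with
  | algebraMap r =>
    rw [Algebra.algebraMap_eq_smul_one]
    exact (LinearMap.range f).smul_mem r hone
  | add Y Z hY hZ => exact (LinearMap.range f).add_mem hY hZ
  | ι_mul w Y hY =>
    obtain ⟨X, rfl⟩ := hY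
    exact ⟨p.flip w ⌋ X, contractAction_contract p hω w X⟩

theorem finite_exteriorAlgebra : Module.Finite F (ExteriorAlgebra F N) :=
  .of_basis (Module.finBasis F N).ExteriorAlgebra

theorem finrank_exteriorAlgebra : finrank F (ExteriorAlgebra F N) = 2 ^ finrank F N := by
  rw [finrank_eq_card_basis (Module.finBasis F N).ExteriorAlgebra]
  simp

theorem exists_isPoincareDuality [FiniteDimensional F M] [p.IsPerfPair] {ω : ExteriorAlgebra F N}
    (hω : memPow ⊤ (finrank F N) ω) (hω0 : ω ≠ 0) :
    ∃ D, IsPoincareDuality p D ∧ ∀ X, D X = contractAction p X ω := by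
  have := finite_exteriorAlgebra (F := F) (N := M)
  have := finite_exteriorAlgebra (F := F) (N := N)
  have hrank : finrank F (ExteriorAlgebra F M) = finrank F (ExteriorAlgebra F N) := by
    rw [finrank_exteriorAlgebra, finrank_exteriorAlgebra, finrank_of_isPerfPair p]
  have hsurj := contractAction_surjective p hω hω0
  let D := LinearEquiv.ofBijective _
    ⟨(LinearMap.injective_iff_surjective_of_finrank_eq_finrank hrank).2 hsurj, hsurj⟩
  have hD : ∀ X, D X = contractAction p X ω := fun _ => rfl
  refine ⟨D, ⟨fun v X => contractAction_ι_mul p v X ω, contractAction_contract p hω, ?_⟩, hD⟩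
  rwa [hD, map_one, Module.End.one_apply]

end Construction

section EvalForm

local infixr:75 " ⌋ " => contract

theorem contract_ιMulti (φ : Dual F M) {k : ℕ} (x : Fin (k + 1) → M) :
    φ ⌋ ιMulti F (k + 1) x =
      ∑ i : Fin (k + 1), ((-1) ^ (i : ℕ) * φ (x i)) • ιMulti F k (x ∘ i.succAbove) := by
  induction k with
  | zero => simp [ιMulti_succ_apply, contract_ι, Algebra.algebraMap_eq_smul_one]
  | succ k ih =>
    have hι (i : Fin (k + 1)) : ιMulti F (k + 1) (x ∘ i.succ.succAbove) =
        ι F (x 0) * ιMulti F k (Matrix.vecTail x ∘ i.succAbove) := by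
      rw [ιMulti_succ_apply]
      congr 2
      funext j
      simp [Matrix.vecTail]
    rw [ιMulti_succ_apply, contract_ι_mul, ih, sub_eq_add_neg, Finset.mul_sum,
      ← Finset.sum_neg_distrib, Fin.sum_univ_succ (n := k + 1)]
    congr 1
    · simp [Matrix.vecTail, Function.comp_def]
    · refine Finset.sum_congr rfl fun i _ => ?_
      rw [hι, mul_smul_comm, ← neg_smul, Fin.val_succ, pow_succ, mul_neg_one, neg_mul]
      rfl

variable {V : Type*} [AddCommGroup V] [Module F V] {k m n : ℕ} {Y : ExteriorAlgebra F (Dual F V)}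

theorem evalForm_ιMulti (φ : Fin m → Dual F V) (v : Fin m → V) :
    evalForm m (ιMulti F m φ) v = (Matrix.of fun i j => φ i (v j)).det := by
  rw [evalForm, liftAlternating_apply_ιMulti, Pi.single_eq_same]
  rfl

theorem evalForm_add (Y Z : ExteriorAlgebra F (Dual F V)) (v : Fin m → V) :
    evalForm m (Y + Z) v = evalForm m Y v + evalForm m Z v :=
  map_add _ Y Z

theorem evalForm_sub (Y Z : ExteriorAlgebra F (Dual F V)) (v : Fin m → V) :
    evalForm m (Y - Z) v = evalForm m Y v - evalForm m Z v :=
  map_sub _ Y Z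

theorem evalForm_smul (c : F) (Y : ExteriorAlgebra F (Dual F V)) (v : Fin m → V) :
    evalForm m (c • Y) v = c * evalForm m Y v :=
  map_smul _ c Y

theorem evalForm_cons (hY : memPow ⊤ (m + 1) Y) (x : V) (v : Fin m → V) :
    evalForm (m + 1) Y (Fin.cons x v) = evalForm m (Dual.eval F V x ⌋ Y) v := by
  rw [memPow_top_iff, ← ιMulti_span_fixedDegree] at hY
  induction hY using Submodule.span_induction with
  | mem Y hY =>
    obtain ⟨φ, rfl⟩ := hY
    rw [contract_ιMulti, evalForm_ιMulti, Matrix.det_succ_column_zero, evalForm, map_sum]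
    refine Finset.sum_congr rfl fun i _ => ?_
    rw [map_smul, ← evalForm, evalForm_ιMulti]
    rfl
  | zero => simp [evalForm]
  | add Y Z _ _ hY hZ => rw [evalForm_add, hY, hZ, map_add, evalForm_add]
  | smul c Y _ hY => rw [evalForm_smul, hY, map_smul, evalForm_smul]

-- Filling the first arguments with `x₁, …, x_k` contracts with `x₁` first, whereas the action of
-- `x₁ ∧ … ∧ x_k` contracts with `x_k` first; reversing the order costs `k.choose 2` transpositions.
theorem evalForm_append (h : n = k + m) (hY : memPow ⊤ n Y) (x : Fin k → V) (v : Fin m → V) :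
    evalForm n Y (Fin.append x v ∘ Fin.cast h) =
      (-1) ^ k.choose 2 * evalForm m (contractAction (Dual.eval F V) (ιMulti F k x) Y) v := by
  induction k generalizing n Y with
  | zero =>
    obtain rfl : n = m := by omega
    rw [Fin.append_left_nil _ _ rfl]
    simp [Function.comp_def]
  | succ k ih =>
    obtain ⟨n, rfl⟩ : ∃ j, n = j + 1 := ⟨k + m, by omega⟩
    obtain ⟨a, x, rfl⟩ : ∃ a y, x = Fin.cons a y := ⟨x 0, Fin.tail x, by simp⟩
    have happend : Fin.append (Fin.cons a x) v ∘ Fin.cast h =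
        (Fin.cons a (Fin.append x v ∘ Fin.cast (by omega)) : Fin (n + 1) → V) := by
      obtain rfl : n = k + m := by omega
      rw [Fin.append_cons]
      rfl
    have hcomm : contractAction (Dual.eval F V) (ιMulti F k x) (Dual.eval F V a ⌋ Y) =
        (-1 : F) ^ k • contractAction (Dual.eval F V) (ιMulti F (k + 1) (Fin.cons a x)) Y := by
      have hx : memPow ⊤ k (ιMulti F k x) := (dec_top_ιMulti x).memPow
      rw [← contractAction_mul_ι, hx.mul_ι, map_smul, ιMulti_succ_apply]
      rfl
    have ha : memPow ⊤ n (Dual.eval F V a ⌋ Y) := hY.contract _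
    rw [happend, evalForm_cons hY, ih (by omega) ha, hcomm, evalForm_smul,
      Nat.choose_succ_succ' k 1, Nat.choose_one_right, pow_add]
    ring

variable [FiniteDimensional F V]

theorem memPow.eq_zero_of_evalForm (hY : memPow ⊤ m Y) (h : ∀ v, evalForm m Y v = 0) : Y = 0 := by
  induction m generalizing Y with
  | zero =>
    obtain ⟨r, rfl⟩ := memPow_zero_iff.1 hY
    have hr := h 0
    rw [Algebra.algebraMap_eq_smul_one, evalForm_smul, ← ιMulti_zero_apply 0, evalForm_ιMulti,
      Matrix.det_fin_zero, mul_one] at hr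
    rw [hr, map_zero]
  | succ m ih =>
    refine hY.eq_zero_of_contract fun φ => ?_
    obtain ⟨x, rfl⟩ := (evalEquiv F V).surjective φ
    exact ih (hY.contract _) fun v => (evalForm_cons hY x v).symm.trans (h _)

theorem exists_isPoincareDuality_eq (hk : k ≤ n) (hn : finrank F V = n)
    (vol : ⋀[F]^n (Dual F V)) (hvol : vol ≠ 0)
    (δ : ⋀[F]^k V →ₗ[F] ⋀[F]^(n - k) (Dual F V))
    (hδ : ∀ (x : Fin k → V) (v : Fin (n - k) → V),
      evalForm (n - k) (δ (exteriorPower.ιMulti F k x) : ExteriorAlgebra F (Dual F V)) v =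
        evalForm n vol (Fin.append x v ∘ Fin.cast (Nat.add_sub_of_le hk).symm)) :
    ∃ D, IsPoincareDuality (Dual.eval F V) D ∧ ∀ X, (δ X : ExteriorAlgebra F (Dual F V)) = D X := by
  have hn' : finrank F (Dual F V) = n := Subspace.dual_finrank_eq.trans hn
  have hvol' : memPow ⊤ n (vol : ExteriorAlgebra F (Dual F V)) := memPow_top_iff.2 vol.2
  obtain ⟨D, hD, hDX⟩ := exists_isPoincareDuality (Dual.eval F V)
    (ω := (-1 : F) ^ k.choose 2 • (vol : ExteriorAlgebra F (Dual F V)))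
    (by rw [hn']; exact hvol'.smul _) (by simpa using hvol)
  refine ⟨D, hD, fun X => ?_⟩
  suffices h : Submodule.subtype _ ∘ₗ δ = D.toLinearMap ∘ₗ Submodule.subtype _ from
    LinearMap.congr_fun h X
  refine exteriorPower.linearMap_ext (AlternatingMap.ext fun x => sub_eq_zero.1 ?_)
  have hmem : memPow ⊤ (n - k) (D (ιMulti F k x)) := hn' ▸ hD.memPow_map (dec_top_ιMulti x).memPow
  refine ((memPow_top_iff.2 (δ _).2).sub hmem).eq_zero_of_evalForm fun v => ?_
  have hδv := hδ x v
  rw [evalForm_append _ hvol', ← evalForm_smul, ← map_smul, ← hDX] at hδv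
  rw [evalForm_sub, sub_eq_zero]
  exact hδv

end EvalForm

end ExteriorDuality

theorem stmt6_general {F : Type*} [Field F] {V : Type*} [AddCommGroup V] [Module F V]
    [FiniteDimensional F V] (n k : ℕ) (hn : finrank F V = n)
    (hk1 : 1 ≤ k) (hk2 : k ≤ n)
    (vol : ⋀[F]^n (Module.Dual F V)) (hvol : vol ≠ 0)
    (δ : ⋀[F]^k V →ₗ[F] ⋀[F]^(n - k) (Module.Dual F V))
    (hδ : ∀ (x : Fin k → V) (v : Fin (n - k) → V),
      evalForm (n - k)
        (δ ⟨ExteriorAlgebra.ιMulti F k x, ExteriorAlgebra.ιMulti_range F k ⟨x, rfl⟩⟩ :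
          ExteriorAlgebra F (Module.Dual F V)) v =
      evalForm n (vol : ExteriorAlgebra F (Module.Dual F V))
        (fun i : Fin n => Fin.append x v (Fin.cast (by omega) i))) :
    (∀ X : ⋀[F]^k V,
      rInv (⊤ : Submodule F V) k (X : ExteriorAlgebra F V) = 0 →
        rkInv (n - k) (δ X : ExteriorAlgebra F (Module.Dual F V)) < n) ∧
    (∀ X : ⋀[F]^k V,
      rkInv k (X : ExteriorAlgebra F V) = n →
      0 < rInv (⊤ : Submodule F V) k (X : ExteriorAlgebra F V) →
        rkInv (n - k) (δ X : ExteriorAlgebra F (Module.Dual F V)) = n ∧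
        mInv (⊤ : Submodule F (Module.Dual F V)) (n - k)
            (δ X : ExteriorAlgebra F (Module.Dual F V)) =
          rInv (⊤ : Submodule F V) k (X : ExteriorAlgebra F V) ∧
        rInv (⊤ : Submodule F (Module.Dual F V)) (n - k)
            (δ X : ExteriorAlgebra F (Module.Dual F V)) =
          mInv (⊤ : Submodule F V) k (X : ExteriorAlgebra F V)) := by
  have : Nontrivial V := nontrivial_of_finrank_pos (R := F) (by omega)
  have hn' : finrank F (Dual F V) = n := Subspace.dual_finrank_eq.trans hn
  obtain ⟨D, hD, hDδ⟩ := exists_isPoincareDuality_eq hk2 hn vol hvol δ hδ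
  have hmem (X : ⋀[F]^k V) : memPow ⊤ k (X : ExteriorAlgebra F V) := memPow_top_iff.2 X.2
  have hmemδ (X : ⋀[F]^k V) : memPow ⊤ (n - k) (D X) := hDδ X ▸ memPow_top_iff.2 (δ X).2
  refine ⟨fun X hr => ?_, fun X hρ hr => ?_⟩ <;> rw [hDδ]
  · have hX : ¬IsIndivisible (X : ExteriorAlgebra F V) := fun h =>
      (h.rInv_pos hk1 (hmem X)).ne' hr
    rw [← hD.isNondegenerate_map_iff, ← rkInv_eq_finrank_iff (hmemδ X), hn'] at hX
    exact (hn' ▸ Submodule.finrank_le _ : rkInv (n - k) (D X) ≤ n).lt_of_ne hX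
  · have hind := IsIndivisible.of_rInv_pos (hmem X) hr
    have hnd := (rkInv_eq_finrank_iff (hmem X)).1 (hρ.trans hn.symm)
    have hrank := (rkInv_eq_finrank_iff (hmemδ X)).2 (hD.isNondegenerate_map_iff.2 hind)
    exact ⟨hrank.trans hn', hn' ▸ hD.mInv_map (hmem X) hnd hind,
      hn' ▸ hD.rInv_map (hmem X) hnd hind⟩

/-- Let `V` be an `n`-dimensional vector space over a field `F` of
characteristic `0`, `0 ≠ vol ∈ Λⁿ V*`, `1 ≤ k ≤ n-1`, and let `δ : Λ^k V → Λ^{n-k} V*`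
be the dual isomorphism `δ(X) = X ⌟ vol`.  Then:
(i)  if `X ∈ Λ^k V` satisfies `r(X) = 0`, then `ρ(δ(X)) < n`;
(ii) if `X ∈ Λ^k V` satisfies `ρ(X) = n` and `r(X) > 0`, then `ρ(δ(X)) = n`,
     `m(δ(X)) = r(X)` and `r(δ(X)) = m(X)`. -/
theorem stmt6 {F : Type*} [Field F] [CharZero F] {V : Type*} [AddCommGroup V] [Module F V]
    [FiniteDimensional F V] (n k : ℕ) (hn : finrank F V = n)
    (hk1 : 1 ≤ k) (hk2 : k ≤ n - 1)
    (vol : ⋀[F]^n (Module.Dual F V)) (hvol : vol ≠ 0)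
    (δ : ⋀[F]^k V →ₗ[F] ⋀[F]^(n - k) (Module.Dual F V))
    (hδ : ∀ (x : Fin k → V) (v : Fin (n - k) → V),
      evalForm (n - k)
        (δ ⟨ExteriorAlgebra.ιMulti F k x, ExteriorAlgebra.ιMulti_range F k ⟨x, rfl⟩⟩ :
          ExteriorAlgebra F (Module.Dual F V)) v =
      evalForm n (vol : ExteriorAlgebra F (Module.Dual F V))
        (fun i : Fin n => Fin.append x v (Fin.cast (by omega) i))) :
    (∀ X : ⋀[F]^k V,
      rInv (⊤ : Submodule F V) k (X : ExteriorAlgebra F V) = 0 →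
        rkInv (n - k) (δ X : ExteriorAlgebra F (Module.Dual F V)) < n) ∧
    (∀ X : ⋀[F]^k V,
      rkInv k (X : ExteriorAlgebra F V) = n →
      0 < rInv (⊤ : Submodule F V) k (X : ExteriorAlgebra F V) →
        rkInv (n - k) (δ X : ExteriorAlgebra F (Module.Dual F V)) = n ∧
        mInv (⊤ : Submodule F (Module.Dual F V)) (n - k)
            (δ X : ExteriorAlgebra F (Module.Dual F V)) =
          rInv (⊤ : Submodule F V) k (X : ExteriorAlgebra F V) ∧
        rInv (⊤ : Submodule F (Module.Dual F V)) (n - k)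
            (δ X : ExteriorAlgebra F (Module.Dual F V)) =
          mInv (⊤ : Submodule F V) k (X : ExteriorAlgebra F V)) :=
  stmt6_general n k hn hk1 (hk2.trans (n.sub_le 1)) vol hvol δ hδ
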